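/- There exists an absolute constant C > 0 such that the following holds. Let N and m be positive integers, let A ⊆ [N] be nonempty with density α = |A|/N, and let B be a finite subset of (0,1]. Then Σ_{b ∈ B} |1̂_A(b)| ≤ C · |A| · α^{−1/(2m)} · E_{2m}(B; 1/N)^{1/(2m)}. -/

import Mathlib

/-- `e(x) = e^{2πix}`. -/
noncomputable def eu (x : ℝ) : ℂ := Complex.exp (2 * Real.pi * Complex.I * x)

/-- The Fourier transform of the indicator of `A`: `1̂_A(γ) = ∑_{a ∈ A} e(aγ)`. -/
noncomputable def hatInd (A : Finset ℕ) (γ : ℝ) : ℂ := ∑ a ∈ A, eu (a * γ)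

/-- The approximate `2m`-fold additive energy of a finite set of reals:
the number of tuples `(b₁, …, b₂ₘ) ∈ 𝒞^{2m}` with
`|b₁ + ⋯ + bₘ - bₘ₊₁ - ⋯ - b₂ₘ| ≤ δ`. -/
noncomputable def approxEnergy (m : ℕ) (𝒞 : Finset ℝ) (δ : ℝ) : ℕ :=
  (((Fintype.piFinset fun _ : Fin m => 𝒞) ×ˢ Fintype.piFinset fun _ : Fin m => 𝒞).filter
    fun p => |(∑ i, p.1 i) - ∑ i, p.2 i| ≤ δ).card

/-!
By duality `∑ b ∈ B, ‖1̂_A(b)‖` is at most `∑ a ∈ A, ‖S(a)‖` for an exponential sum `S` with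
frequencies in `B` and unimodular coefficients, so Hölder's inequality reduces the theorem to a
bound for the `2m`-th moment of `S` over `[1, N]`. Now `S ^ m` is an exponential sum whose
frequencies are the sums `b₁ + ⋯ + bₘ`, and its second moment obeys a large sieve inequality. If
its frequencies lie on the grid `ℤ / N`, orthogonality bounds the second moment by `N` times the
number of pairs of frequencies that agree modulo `1`, and Cauchy-Schwarz over the at most `O(m)`
unit intervals met by the frequencies reduces these to pairs of equal ones. Rounding arbitrary
frequencies down to the grid costs a factor `e(aθ / N)` with `0 ≤ θ < 1`, whose power series
separates `a` from `θ`: it multiplies the `ℓ²` bound by at most `∑ᵣ (2π)ʳ / r! = e^{2π}`. The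
factor `O(m)` is harmless because its `2m`-th root is bounded.
-/

open Finset
open scoped ComplexConjugate FourierTransform

lemma eu_eq_fourierChar (x : ℝ) : eu x = 𝐞 x := by
  rw [eu, Real.fourierChar_apply]
  congr 1
  push_cast
  ring

lemma eu_add (x y : ℝ) : eu (x + y) = eu x * eu y := by
  simp only [eu_eq_fourierChar, AddChar.map_add_eq_mul, Circle.coe_mul]

lemma eu_sum {ι : Type*} (s : Finset ι) (f : ι → ℝ) : eu (∑ i ∈ s, f i) = ∏ i ∈ s, eu (f i) := by
  simp only [eu, Complex.ofReal_sum, mul_sum, Complex.exp_sum]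

lemma eu_natCast_mul (n : ℕ) (x : ℝ) : eu (n * x) = eu x ^ n := by
  simp only [eu_eq_fourierChar, ← nsmul_eq_mul, AddChar.map_nsmul_eq_pow, Circle.coe_pow]

lemma conj_eu (x : ℝ) : conj (eu x) = eu (-x) := by
  simp only [eu_eq_fourierChar, AddChar.map_neg_eq_inv, Circle.coe_inv_eq_conj]

lemma eu_eq_one_iff (x : ℝ) : eu x = 1 ↔ ∃ n : ℤ, x = n := by
  rw [eu, Complex.exp_eq_one_iff]
  refine exists_congr fun n => ?_
  rw [show (2 * Real.pi * Complex.I * x : ℂ) = x * (2 * Real.pi * Complex.I) by ring,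
    mul_left_inj' Complex.two_pi_I_ne_zero]
  exact_mod_cast Iff.rfl

lemma eu_intCast_div_eq_one_iff {N : ℕ} (hN : 0 < N) (k : ℤ) :
    eu (k / N) = 1 ↔ (N : ℤ) ∣ k := by
  have hN' : (N : ℝ) ≠ 0 := by positivity
  rw [eu_eq_one_iff]
  refine exists_congr fun n => ?_
  rw [div_eq_iff hN', mul_comm]
  exact_mod_cast Iff.rfl

lemma sum_Icc_eu_mul_intCast_div {N : ℕ} (hN : 0 < N) (k : ℤ) :
    ∑ a ∈ Icc 1 N, eu (a * (k / N)) = if (N : ℤ) ∣ k then (N : ℂ) else 0 := by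
  simp only [eu_natCast_mul]
  split_ifs with hk
  · simp [(eu_intCast_div_eq_one_iff hN k).2 hk]
  · have hne : eu (k / N) ≠ 1 := mt (eu_intCast_div_eq_one_iff hN k).1 hk
    have hpow : eu (k / N) ^ N = 1 := by
      rw [← eu_natCast_mul, mul_div_cancel₀ _ (by positivity), eu_eq_one_iff]
      exact ⟨k, rfl⟩
    rw [← Ico_add_one_right_eq_Icc, geom_sum_Ico hne (by omega), pow_succ, hpow]
    simp

/-- The exponential sum `∑ x ∈ X, c x e(a s(x))` with frequencies `s x` and coefficients `c x`.
The frequencies are a function on `X`, so that they may be repeated: this is needed for the sums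
`b₁ + ⋯ + bₘ`. -/
noncomputable def expSum {ι : Type*} (X : Finset ι) (c : ι → ℂ) (s : ι → ℝ) (a : ℕ) : ℂ :=
  ∑ x ∈ X, c x * eu (a * s x)

section ExpSum

variable {ι : Type*} (X : Finset ι) (c : ι → ℂ) (s : ι → ℝ)

lemma expSum_pow (m a : ℕ) :
    expSum X c s a ^ m =
      expSum (Fintype.piFinset fun _ : Fin m => X) (fun x => ∏ i, c (x i))
        (fun x => ∑ i, s (x i)) a := by
  simp only [expSum, sum_pow', prod_mul_distrib, mul_sum, eu_sum]

lemma ofReal_sum_norm_sq_expSum (I : Finset ℕ) :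
    ((∑ a ∈ I, ‖expSum X c s a‖ ^ 2 : ℝ) : ℂ) =
      ∑ p ∈ X ×ˢ X, c p.1 * conj (c p.2) * ∑ a ∈ I, eu (a * (s p.1 - s p.2)) := by
  push_cast
  simp only [mul_sum]
  rw [sum_comm]
  refine sum_congr rfl fun a _ => ?_
  rw [← Complex.mul_conj', expSum, map_sum, sum_mul_sum, ← sum_product']
  refine sum_congr rfl fun p _ => ?_
  rw [map_mul, conj_eu, mul_sub, sub_eq_add_neg, eu_add]
  ring

lemma sum_norm_sq_expSum_grid_le {N : ℕ} (hN : 0 < N) (j : ι → ℤ) (hc : ∀ x ∈ X, ‖c x‖ ≤ 1) :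
    ∑ a ∈ Icc 1 N, ‖expSum X c (fun x => j x / N) a‖ ^ 2 ≤
      N * #{p ∈ X ×ˢ X | j p.1 % N = j p.2 % N} := by
  have hcoeff : ∀ p ∈ X ×ˢ X, ‖c p.1 * conj (c p.2)‖ ≤ 1 := fun p hp => by
    rw [norm_mul, RCLike.norm_conj]
    exact mul_le_one₀ (hc _ (mem_product.1 hp).1) (norm_nonneg _) (hc _ (mem_product.1 hp).2)
  have horth : ∀ p : ι × ι, ∑ a ∈ Icc 1 N, eu (a * (j p.1 / N - j p.2 / N)) =
      if j p.1 % N = j p.2 % N then (N : ℂ) else 0 := fun p => by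
    simp only [← sub_div, ← Int.cast_sub, sum_Icc_eu_mul_intCast_div hN,
      Int.emod_eq_emod_iff_emod_sub_eq_zero, Int.dvd_iff_emod_eq_zero]
  calc ∑ a ∈ Icc 1 N, ‖expSum X c (fun x => j x / N) a‖ ^ 2
      = ‖∑ p ∈ X ×ˢ X with j p.1 % N = j p.2 % N, c p.1 * conj (c p.2) * N‖ := by
        rw [← Real.norm_of_nonneg (sum_nonneg fun _ _ => sq_nonneg _), ← Complex.norm_real,
          ofReal_sum_norm_sq_expSum]
        simp only [horth, mul_ite, mul_zero, sum_filter]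
    _ ≤ ∑ p ∈ X ×ˢ X with j p.1 % N = j p.2 % N, (N : ℝ) := by
        refine norm_sum_le_of_le _ fun p hp => ?_
        rw [norm_mul, Complex.norm_natCast]
        exact mul_le_of_le_one_left N.cast_nonneg (hcoeff p (mem_filter.1 hp).1)
    _ = N * #{p ∈ X ×ˢ X | j p.1 % N = j p.2 % N} := by
        rw [sum_const, nsmul_eq_mul, mul_comm]

end ExpSum

section Collisions

variable {ι κ τ : Type*} [DecidableEq κ] [DecidableEq τ]

lemma card_filter_product_eq_sum_card_fiber_sq {X : Finset ι} {f : ι → κ} {S : Finset κ}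
    (hf : ∀ x ∈ X, f x ∈ S) :
    #{p ∈ X ×ˢ X | f p.1 = f p.2} = ∑ k ∈ S, #{x ∈ X | f x = k} ^ 2 := by
  rw [card_eq_sum_card_fiberwise (f := fun p => f p.1) (t := S)
    fun p hp => hf _ (mem_product.1 (mem_filter.1 hp).1).1]
  refine sum_congr rfl fun k _ => ?_
  rw [sq, ← card_product]
  congr 1
  ext p
  simp only [mem_filter, mem_product]
  grind

lemma card_filter_product_le_card_mul {X : Finset ι} (f : ι → κ) {q : ι → τ} {T : Finset τ}
    (hq : ∀ x ∈ X, q x ∈ T) :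
    #{p ∈ X ×ˢ X | f p.1 = f p.2} ≤ #T * #{p ∈ X ×ˢ X | f p.1 = f p.2 ∧ q p.1 = q p.2} := by
  have hf : ∀ x ∈ X, f x ∈ X.image f := fun _ => mem_image_of_mem f
  have hfiber : ∀ k, #{x ∈ X | f x = k} = ∑ t ∈ T, #{x ∈ X | (f x, q x) = (k, t)} := fun k => by
    rw [card_eq_sum_card_fiberwise (f := q) (t := T) fun x hx => hq x (mem_filter.1 hx).1]
    simp only [filter_filter, Prod.mk.injEq]
  calc #{p ∈ X ×ˢ X | f p.1 = f p.2}
      = ∑ k ∈ X.image f, (∑ t ∈ T, #{x ∈ X | (f x, q x) = (k, t)}) ^ 2 := by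
        simp only [card_filter_product_eq_sum_card_fiber_sq hf, hfiber]
    _ ≤ ∑ k ∈ X.image f, #T * ∑ t ∈ T, #{x ∈ X | (f x, q x) = (k, t)} ^ 2 :=
        sum_le_sum fun _ _ => sq_sum_le_card_mul_sum_sq
    _ = #T * #{p ∈ X ×ˢ X | (f p.1, q p.1) = (f p.2, q p.2)} := by
        rw [← mul_sum, ← sum_product',
          ← card_filter_product_eq_sum_card_fiber_sq (f := fun x => (f x, q x))
            fun x hx => mem_product.2 ⟨hf x hx, hq x hx⟩]
    _ = #T * #{p ∈ X ×ˢ X | f p.1 = f p.2 ∧ q p.1 = q p.2} := by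
        simp only [Prod.mk.injEq]

end Collisions

lemma sum_norm_sq_le_of_hasSum {ρ κ E : Type*} [NormedAddCommGroup E] (I : Finset κ)
    {f : ρ → κ → E} {g : κ → E} (hfg : ∀ a ∈ I, HasSum (f · a) (g a)) {w : ρ → ℝ} {W : ℝ}
    (hw : HasSum w W) (hw0 : ∀ r, 0 ≤ w r) (h : ∀ r, ∑ a ∈ I, ‖f r a‖ ^ 2 ≤ w r ^ 2) :
    ∑ a ∈ I, ‖g a‖ ^ 2 ≤ W ^ 2 := by
  let toL2 (z : κ → E) : PiLp 2 fun _ : I => E := WithLp.toLp 2 fun a => z a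
  have norm_sq_toL2 (z : κ → E) : ‖toL2 z‖ ^ 2 = ∑ a ∈ I, ‖z a‖ ^ 2 := by
    rw [PiLp.norm_sq_eq_of_L2, ← sum_coe_sort I]
  have hasSum_toL2 : HasSum (fun r => toL2 (f r)) (toL2 g) :=
    (Pi.hasSum.2 fun a : I => hfg a a.2).map (WithLp.addEquiv 2 (I → E)).symm
      (PiLp.continuous_toLp 2 _)
  have norm_toL2_le (r : ρ) : ‖toL2 (f r)‖ ≤ w r :=
    le_of_sq_le_sq (by rw [norm_sq_toL2]; exact h r) (hw0 r)
  rw [← norm_sq_toL2]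
  gcongr
  exact hasSum_toL2.norm_le_of_bounded hw norm_toL2_le

-- In the power series of `exp (u a * v x)` the variables `a` and `x` separate, and `hK` applies to
-- the `r`-th term with coefficients `c x * v x ^ r`.
lemma sum_norm_sq_sum_mul_exp_le {ι κ : Type*} (X : Finset ι) (I : Finset κ)
    (φ : ι → κ → ℂ) {K : ℝ}
    (hK : ∀ c : ι → ℂ, (∀ x ∈ X, ‖c x‖ ≤ 1) → ∑ a ∈ I, ‖∑ x ∈ X, c x * φ x a‖ ^ 2 ≤ K)
    {u : κ → ℂ} {R : ℝ} (hR : 0 ≤ R) (hu : ∀ a ∈ I, ‖u a‖ ≤ R)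
    {v : ι → ℂ} (hv : ∀ x ∈ X, ‖v x‖ ≤ 1) {c : ι → ℂ} (hc : ∀ x ∈ X, ‖c x‖ ≤ 1) :
    ∑ a ∈ I, ‖∑ x ∈ X, c x * Complex.exp (u a * v x) * φ x a‖ ^ 2 ≤ Real.exp R ^ 2 * K := by
  have hK0 : 0 ≤ K := (sum_nonneg fun _ _ => sq_nonneg _).trans (hK c hc)
  have hasSum_exp_mul (a : κ) :
      HasSum (fun r : ℕ => u a ^ r / r.factorial * ∑ x ∈ X, c x * v x ^ r * φ x a)
        (∑ x ∈ X, c x * Complex.exp (u a * v x) * φ x a) := by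
    simp only [mul_sum, Complex.exp_eq_exp_ℂ]
    refine hasSum_sum fun x _ => ?_
    convert! ((NormedSpace.expSeries_div_hasSum_exp (u a * v x)).mul_left (c x)).mul_right
      (φ x a) using 2 with r
    ring
  have hasSum_weights : HasSum (fun r : ℕ => R ^ r / r.factorial * √K) (Real.exp R * √K) := by
    rw [Real.exp_eq_exp_ℝ]
    exact (NormedSpace.expSeries_div_hasSum_exp R).mul_right _
  have hcoeff (r : ℕ) : ∀ x ∈ X, ‖c x * v x ^ r‖ ≤ 1 := fun x hx => by
    rw [norm_mul, norm_pow]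
    exact mul_le_one₀ (hc x hx) (by positivity) (pow_le_one₀ (norm_nonneg _) (hv x hx))
  rw [← Real.sq_sqrt hK0, ← mul_pow]
  refine sum_norm_sq_le_of_hasSum I (fun a _ => hasSum_exp_mul a) hasSum_weights
    (fun r => by positivity) fun r => ?_
  calc ∑ a ∈ I, ‖u a ^ r / r.factorial * ∑ x ∈ X, c x * v x ^ r * φ x a‖ ^ 2
      ≤ ∑ a ∈ I, (R ^ r / r.factorial) ^ 2 * ‖∑ x ∈ X, c x * v x ^ r * φ x a‖ ^ 2 := by
        refine sum_le_sum fun a ha => ?_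
        rw [norm_mul, norm_div, norm_pow, Complex.norm_natCast, mul_pow]
        gcongr
        exact hu a ha
    _ ≤ (R ^ r / r.factorial) ^ 2 * K := by
        rw [← mul_sum]
        gcongr
        exact hK _ (hcoeff r)
    _ = (R ^ r / r.factorial * √K) ^ 2 := by rw [mul_pow, Real.sq_sqrt hK0]

lemma eu_mul_eq_exp_mul_eu {N : ℕ} (hN : 0 < N) (a : ℕ) (s : ℝ) :
    eu (a * s) = Complex.exp (2 * Real.pi * Complex.I * (a / N) * Int.fract (N * s)) *
      eu (a * (⌊N * s⌋ / N)) := by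
  have hN' : (N : ℝ) ≠ 0 := by positivity
  have hs : a * s = a / N * Int.fract (N * s) + a * (⌊N * s⌋ / N) := by
    rw [Int.fract]
    field_simp
    ring
  conv_lhs => rw [hs, eu_add, eu]
  push_cast
  simp only [mul_assoc]

lemma abs_sub_le_of_floor_eq {N : ℕ} (hN : 0 < N) {s t : ℝ} (hst : ⌊s⌋ = ⌊t⌋)
    (hmod : ⌊N * s⌋ % N = ⌊N * t⌋ % N) : |s - t| ≤ 1 / N := by
  have hN' : (0 : ℝ) < N := by positivity
  have hfloor : ⌊N * s⌋ = ⌊N * t⌋ := by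
    rw [← Int.emod_add_mul_ediv ⌊N * s⌋ N, ← Int.emod_add_mul_ediv ⌊N * t⌋ N, hmod,
      Int.natCast_mul_floor_div_cancel hN.ne', Int.natCast_mul_floor_div_cancel hN.ne', hst]
  rw [le_div_iff₀' hN', ← Nat.abs_cast, ← abs_mul, mul_sub]
  exact (Int.abs_sub_lt_one_of_floor_eq_floor hfloor).le

lemma sum_norm_sq_expSum_le {ι : Type*} (X : Finset ι) {N : ℕ} (hN : 0 < N) {s : ι → ℝ}
    {T : Finset ℤ} (hT : ∀ x ∈ X, ⌊s x⌋ ∈ T) {c : ι → ℂ} (hc : ∀ x ∈ X, ‖c x‖ ≤ 1) :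
    ∑ a ∈ Icc 1 N, ‖expSum X c s a‖ ^ 2 ≤
      Real.exp (2 * Real.pi) ^ 2 * (N * (#T * #{p ∈ X ×ˢ X | |s p.1 - s p.2| ≤ 1 / N})) := by
  have hcount : #{p ∈ X ×ˢ X | ⌊N * s p.1⌋ % N = ⌊N * s p.2⌋ % N} ≤
      #T * #{p ∈ X ×ˢ X | |s p.1 - s p.2| ≤ 1 / N} :=
    (card_filter_product_le_card_mul (fun x => ⌊N * s x⌋ % N) hT).trans <|
      Nat.mul_le_mul_left _ <| card_le_card <| monotone_filter_right _ fun _ _ h =>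
        abs_sub_le_of_floor_eq hN h.2 h.1
  have hgrid (c : ι → ℂ) (hc : ∀ x ∈ X, ‖c x‖ ≤ 1) :
      ∑ a ∈ Icc 1 N, ‖∑ x ∈ X, c x * eu (a * (⌊N * s x⌋ / N))‖ ^ 2 ≤
        N * (#T * #{p ∈ X ×ˢ X | |s p.1 - s p.2| ≤ 1 / N}) :=
    (sum_norm_sq_expSum_grid_le X c hN _ hc).trans (by gcongr; exact_mod_cast hcount)
  have hphase : ∀ a ∈ Icc 1 N, ‖2 * Real.pi * Complex.I * (a / N : ℂ)‖ ≤ 2 * Real.pi := by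
    intro a ha
    have haN : (a / N : ℝ) ≤ 1 :=
      div_le_one_of_le₀ (by exact_mod_cast (mem_Icc.1 ha).2) N.cast_nonneg
    simpa [abs_of_pos Real.pi_pos] using mul_le_of_le_one_right Real.two_pi_pos.le haN
  have hfract : ∀ x ∈ X, ‖((Int.fract (N * s x) : ℝ) : ℂ)‖ ≤ 1 := fun x _ => by
    rw [Complex.norm_of_nonneg (Int.fract_nonneg _)]
    exact (Int.fract_lt_one _).le
  have hexpSum (a : ℕ) : expSum X c s a = ∑ x ∈ X, c x *
      Complex.exp (2 * Real.pi * Complex.I * (a / N) * Int.fract (N * s x)) *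
        eu (a * (⌊N * s x⌋ / N)) := by
    simp only [expSum, mul_assoc (c _), ← eu_mul_eq_exp_mul_eu hN]
  simp only [hexpSum]
  exact sum_norm_sq_sum_mul_exp_le X (Icc 1 N) (fun x a => eu (a * (⌊N * s x⌋ / N))) hgrid
    Real.two_pi_pos.le hphase hfract hc

lemma card_Icc_floor_le {x y : ℝ} (hxy : x ≤ y) : (#(Icc ⌊x⌋ ⌊y⌋) : ℝ) ≤ y - x + 2 := by
  have hfloor : ⌊x⌋ ≤ ⌊y⌋ := Int.floor_mono hxy
  have hcard : (#(Icc ⌊x⌋ ⌊y⌋) : ℝ) = ⌊y⌋ + 1 - ⌊x⌋ := by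
    exact_mod_cast Int.card_Icc_of_le _ _ (by omega)
  linarith [Int.floor_le y, Int.lt_floor_add_one x]

lemma sum_norm_pow_expSum_le {N : ℕ} (hN : 0 < N) (m : ℕ) {B : Finset ℝ} {u L : ℝ} (hL : 0 ≤ L)
    (hB : ∀ b ∈ B, b ∈ Set.Icc u (u + L)) {c : ℝ → ℂ} (hc : ∀ b ∈ B, ‖c b‖ ≤ 1) :
    ∑ a ∈ Icc 1 N, ‖expSum B c id a‖ ^ (2 * m) ≤
      Real.exp (2 * Real.pi) ^ 2 * (N * ((m * L + 2) * approxEnergy m B (1 / N))) := by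
  have hfloor : ∀ x ∈ Fintype.piFinset fun _ : Fin m => B,
      ⌊∑ i, x i⌋ ∈ Icc ⌊m * u⌋ ⌊m * (u + L)⌋ := by
    intro x hx
    have hxB (i : Fin m) := hB _ (Fintype.mem_piFinset.1 hx i)
    have hlower := card_nsmul_le_sum univ x u fun i _ => (hxB i).1
    have hupper := sum_le_card_nsmul univ x (u + L) fun i _ => (hxB i).2
    simp only [card_univ, Fintype.card_fin, nsmul_eq_mul] at hlower hupper
    exact mem_Icc.2 ⟨Int.floor_mono hlower, Int.floor_mono hupper⟩
  have hcoeff : ∀ x ∈ Fintype.piFinset fun _ : Fin m => B, ‖∏ i, c (x i)‖ ≤ 1 := by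
    intro x hx
    rw [norm_prod]
    exact prod_le_one (fun _ _ => norm_nonneg _) fun i _ => hc _ (Fintype.mem_piFinset.1 hx i)
  have hcard : (#(Icc ⌊m * u⌋ ⌊m * (u + L)⌋) : ℝ) ≤ m * L + 2 := by
    refine (card_Icc_floor_le (by gcongr; linarith)).trans_eq ?_
    ring
  have hpow (a : ℕ) : ‖expSum B c id a‖ ^ (2 * m) =
      ‖expSum (Fintype.piFinset fun _ : Fin m => B) (fun x => ∏ i, c (x i))
        (fun x => ∑ i, x i) a‖ ^ 2 := by
    rw [mul_comm 2 m, pow_mul, ← norm_pow, expSum_pow]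
    rfl
  simp only [hpow]
  refine (sum_norm_sq_expSum_le _ hN hfloor hcoeff).trans ?_
  gcongr
  exact le_rfl

lemma exists_sum_norm_hatInd_le (A : Finset ℕ) (B : Finset ℝ) : ∃ c : ℝ → ℂ, (∀ b, ‖c b‖ = 1) ∧
    ∑ b ∈ B, ‖hatInd A b‖ ≤ ∑ a ∈ A, ‖expSum B c id a‖ := by
  choose c hc hcz using fun b : ℝ => Complex.exists_norm_eq_mul_self (hatInd A b)
  have hswap : ((∑ b ∈ B, ‖hatInd A b‖ : ℝ) : ℂ) = ∑ a ∈ A, expSum B c id a := by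
    push_cast
    simp only [hcz]
    simp only [hatInd, expSum, mul_sum, id]
    rw [sum_comm]
  refine ⟨c, hc, ?_⟩
  rw [← Real.norm_of_nonneg (sum_nonneg fun b _ => norm_nonneg (hatInd A b)),
    ← Complex.norm_real, hswap]
  exact norm_sum_le _ _

lemma sum_norm_hatInd_pow_le {N m : ℕ} (hm : 0 < m) {A : Finset ℕ} (hA : A.Nonempty)
    (hAN : A ⊆ Icc 1 N) {B : Finset ℝ} {u L : ℝ} (hL : 0 ≤ L)
    (hB : ∀ b ∈ B, b ∈ Set.Icc u (u + L)) :
    (∑ b ∈ B, ‖hatInd A b‖) ^ (2 * m) ≤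
      Real.exp (2 * Real.pi) ^ 2 * (m * L + 2) * #A ^ (2 * m) *
        (#A / N : ℝ)⁻¹ * approxEnergy m B (1 / N) := by
  obtain ⟨c, hc, hdual⟩ := exists_sum_norm_hatInd_le A B
  have hA0 : (#A : ℝ) ≠ 0 := by exact_mod_cast hA.card_ne_zero
  have hN : 0 < N := by
    obtain ⟨a, ha⟩ := hA
    have := mem_Icc.1 (hAN ha)
    omega
  obtain ⟨k, hk⟩ := Nat.exists_eq_add_one_of_ne_zero (by omega : 2 * m ≠ 0)
  calc (∑ b ∈ B, ‖hatInd A b‖) ^ (2 * m)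
      ≤ (∑ a ∈ A, ‖expSum B c id a‖) ^ (2 * m) := by gcongr
    _ ≤ #A ^ k * ∑ a ∈ A, ‖expSum B c id a‖ ^ (2 * m) := by
        rw [hk]
        exact pow_sum_le_card_mul_sum_pow (fun _ _ => norm_nonneg _) k
    _ ≤ #A ^ k * ∑ a ∈ Icc 1 N, ‖expSum B c id a‖ ^ (2 * m) := by gcongr
    _ ≤ #A ^ k * (Real.exp (2 * Real.pi) ^ 2 * (N * ((m * L + 2) * approxEnergy m B (1 / N)))) := by
        gcongr
        exact sum_norm_pow_expSum_le hN m hL hB fun b _ => (hc b).le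
    _ = _ := by
        rw [hk]
        field_simp [hA0]
        ring

theorem statement_11_general {N m : ℕ} (hm : 0 < m) {A : Finset ℕ} (hA : A.Nonempty)
    (hAN : A ⊆ Icc 1 N) {B : Finset ℝ} {u L : ℝ} (hL : 0 ≤ L)
    (hB : ∀ b ∈ B, b ∈ Set.Icc u (u + L)) :
    ∑ b ∈ B, ‖hatInd A b‖ ≤
      (L + 2) * Real.exp (2 * Real.pi) * #A * (#A / N : ℝ) ^ (-(1 / (2 * (m : ℝ)))) *
        (approxEnergy m B (1 / N) : ℝ) ^ (1 / (2 * (m : ℝ))) := by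
  have rpow_pow {t : ℝ} (ht : 0 ≤ t) : (t ^ (1 / (2 * (m : ℝ)))) ^ (2 * m) = t := by
    rw [one_div]
    exact_mod_cast Real.rpow_inv_natCast_pow ht (by omega : 2 * m ≠ 0)
  have hconst : Real.exp (2 * Real.pi) ^ 2 * (m * L + 2) ≤
      ((L + 2) * Real.exp (2 * Real.pi)) ^ (2 * m) := by
    have hbernoulli := one_add_mul_le_pow (by linarith : -2 ≤ L + 1) (2 * m)
    have hm1 : (1 : ℝ) ≤ m := by exact_mod_cast hm
    rw [mul_pow, mul_comm]
    gcongr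
    · push_cast at hbernoulli
      ring_nf at hbernoulli ⊢
      nlinarith
    · exact Real.one_le_exp Real.two_pi_pos.le
    · omega
  refine le_of_pow_le_pow_left₀ (n := 2 * m) (by omega) (by positivity) ?_
  rw [Real.rpow_neg (by positivity), mul_pow, mul_pow, mul_pow, inv_pow, rpow_pow (by positivity),
    rpow_pow (by positivity)]
  exact (sum_norm_hatInd_pow_le hm hA hAN hL hB).trans (by gcongr)

theorem statement_11 :
    ∃ C > (0 : ℝ), ∀ N m : ℕ, 0 < N → 0 < m →
      ∀ A : Finset ℕ, A.Nonempty → A ⊆ Finset.Icc 1 N →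
      ∀ α : ℝ, α = (A.card : ℝ) / N →
      ∀ B : Finset ℝ, (∀ b ∈ B, 0 < b ∧ b ≤ 1) →
        (∑ b ∈ B, ‖hatInd A b‖) ≤
          C * A.card * α ^ (-(1 / (2 * (m : ℝ)))) *
            (approxEnergy m B (1 / N) : ℝ) ^ (1 / (2 * (m : ℝ))) := by
  refine ⟨(1 + 2) * Real.exp (2 * Real.pi), by positivity, ?_⟩
  rintro N m - hm A hA hAN _ rfl B hB
  exact statement_11_general hm hA hAN zero_le_one fun b hb =>
    ⟨(hB b hb).1.le, (hB b hb).2.trans_eq (zero_add 1).symm⟩
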